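/- Let Λ and C be finite non-empty sets, let m* be a positive integer, let m** = f^{8,*}_Λ(m*, C), and let d: U_{m**,Λ} → C be any coloring. Then there is a coloring e: U_{m*,Λ} → C such that (1) if η₁, η₂ ∈ U_{m*,Λ} satisfy |η₁⁻¹{α}| = |η₂⁻¹{α}| for all α ∈ Λ, then e(η₁) = e(η₂), and (2) if there is an e-monochromatic line in U_{m*,Λ}, then there is a d-monochromatic line in U_{m**,Λ}. -/

import Mathlib

open Finset

/-- `ν` belongs to the subspace `S(⟨Ms ℓ : ℓ < m⟩, ρ)` of `U_{Fin k, Λ}`: it agrees with `ρ`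
off the blocks and is constant on each block `Ms ℓ`. -/
def InSubspace {Λ : Type*} {k m : ℕ} (Ms : Fin m → Finset (Fin k))
    (ρ : Fin k → Λ) (ν : Fin k → Λ) : Prop :=
  (∀ t : Fin k, (∀ ℓ, t ∉ Ms ℓ) → ν t = ρ t) ∧
    ∀ ℓ : Fin m, ∃ a : Λ, ∀ t ∈ Ms ℓ, ν t = a

/-- The number of blocks `Ms ℓ` on which `ν` is constantly `α`. -/
def blockCount {Λ : Type*} [DecidableEq Λ] {k m : ℕ} (Ms : Fin m → Finset (Fin k))
    (ν : Fin k → Λ) (α : Λ) : ℕ :=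
  (Finset.univ.filter fun ℓ : Fin m => ∀ t ∈ Ms ℓ, ν t = α).card

/-- `k` is large enough for the `m`-dimensional Hales-Jewett property: every `C`-coloring of
`U_{Fin k, Λ}` admits a monochromatic `m`-dimensional subspace. -/
def HJProp (Λ C : Type*) (m k : ℕ) : Prop :=
  ∀ d : (Fin k → Λ) → C,
    ∃ (Ms : Fin m → Finset (Fin k)) (ρ : Fin k → Λ),
      (∀ ℓ, (Ms ℓ).Nonempty) ∧
      (∀ ℓ₁ ℓ₂, ℓ₁ ≠ ℓ₂ → Disjoint (Ms ℓ₁) (Ms ℓ₂)) ∧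
      ∃ c : C, ∀ ν, InSubspace Ms ρ ν → d ν = c

/-- The Hales-Jewett number `hj_C(m, Λ)`. -/
noncomputable def hjNum (Λ C : Type*) (m : ℕ) : ℕ := sInf {k | HJProp Λ C m k}

/-- Like `HJProp`, but the blocks of the monochromatic subspace all have the same size. -/
def HJEqProp (Λ C : Type*) (m k : ℕ) : Prop :=
  ∀ d : (Fin k → Λ) → C,
    ∃ (Ms : Fin m → Finset (Fin k)) (ρ : Fin k → Λ),
      (∀ ℓ, (Ms ℓ).Nonempty) ∧
      (∀ ℓ₁ ℓ₂, ℓ₁ ≠ ℓ₂ → Disjoint (Ms ℓ₁) (Ms ℓ₂)) ∧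
      (∀ ℓ₁ ℓ₂, (Ms ℓ₁).card = (Ms ℓ₂).card) ∧
      ∃ c : C, ∀ ν, InSubspace Ms ρ ν → d ν = c

/-- The number `hj^=_C(m, Λ)`. -/
noncomputable def hjEqNum (Λ C : Type*) (m : ℕ) : ℕ := sInf {k | HJEqProp Λ C m k}

/-- The partition property underlying `f^8_Λ(m, C)`: `d` is constant on the set of members
`ν` of the subspace realizing each letter `α` on exactly `m / |Λ|` many blocks. -/
def F8Prop (Λ C : Type*) [Fintype Λ] [DecidableEq Λ] (m k : ℕ) : Prop :=
  ∀ d : (Fin k → Λ) → C,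
    ∃ (Ms : Fin m → Finset (Fin k)) (ρ : Fin k → Λ),
      (∀ ℓ, (Ms ℓ).Nonempty) ∧
      (∀ ℓ₁ ℓ₂, ℓ₁ ≠ ℓ₂ → Disjoint (Ms ℓ₁) (Ms ℓ₂)) ∧
      ∃ c : C, ∀ ν, InSubspace Ms ρ ν →
        (∀ α : Λ, blockCount Ms ν α = m / Fintype.card Λ) → d ν = c

/-- Shelah's number `f^8_Λ(m, C)`. -/
noncomputable def f8 (Λ C : Type*) [Fintype Λ] [DecidableEq Λ] (m : ℕ) : ℕ :=
  sInf {k | F8Prop Λ C m k}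

/-- As `F8Prop`, but with all blocks of the same size. -/
def F9Prop (Λ C : Type*) [Fintype Λ] [DecidableEq Λ] (m k : ℕ) : Prop :=
  ∀ d : (Fin k → Λ) → C,
    ∃ (Ms : Fin m → Finset (Fin k)) (ρ : Fin k → Λ),
      (∀ ℓ, (Ms ℓ).Nonempty) ∧
      (∀ ℓ₁ ℓ₂, ℓ₁ ≠ ℓ₂ → Disjoint (Ms ℓ₁) (Ms ℓ₂)) ∧
      (∀ ℓ₁ ℓ₂, (Ms ℓ₁).card = (Ms ℓ₂).card) ∧
      ∃ c : C, ∀ ν, InSubspace Ms ρ ν →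
        (∀ α : Λ, blockCount Ms ν α = m / Fintype.card Λ) → d ν = c

/-- Shelah's number `f^9_Λ(m, C)`: the minimal `k` divisible by `|Λ|` with `F9Prop`. -/
noncomputable def f9 (Λ C : Type*) [Fintype Λ] [DecidableEq Λ] (m : ℕ) : ℕ :=
  sInf {k | Fintype.card Λ ∣ k ∧ F9Prop Λ C m k}

/-- The partition property underlying `f^{8,*}_Λ(m, C)`: any two members of the subspace
realizing each letter on the same number of blocks get the same color. -/
def F8StarProp (Λ C : Type*) [DecidableEq Λ] (m k : ℕ) : Prop :=
  ∀ d : (Fin k → Λ) → C,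
    ∃ (Ms : Fin m → Finset (Fin k)) (ρ : Fin k → Λ),
      (∀ ℓ, (Ms ℓ).Nonempty) ∧
      (∀ ℓ₁ ℓ₂, ℓ₁ ≠ ℓ₂ → Disjoint (Ms ℓ₁) (Ms ℓ₂)) ∧
      ∀ ν₁ ν₂, InSubspace Ms ρ ν₁ → InSubspace Ms ρ ν₂ →
        (∀ α : Λ, blockCount Ms ν₁ α = blockCount Ms ν₂ α) → d ν₁ = d ν₂

/-- Shelah's number `f^{8,*}_Λ(m, C)`. -/
noncomputable def f8Star (Λ C : Type*) [DecidableEq Λ] (m : ℕ) : ℕ :=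
  sInf {k | F8StarProp Λ C m k}

/-- As `F8StarProp`, but with all blocks of the same size. -/
def F9StarProp (Λ C : Type*) [DecidableEq Λ] (m k : ℕ) : Prop :=
  ∀ d : (Fin k → Λ) → C,
    ∃ (Ms : Fin m → Finset (Fin k)) (ρ : Fin k → Λ),
      (∀ ℓ, (Ms ℓ).Nonempty) ∧
      (∀ ℓ₁ ℓ₂, ℓ₁ ≠ ℓ₂ → Disjoint (Ms ℓ₁) (Ms ℓ₂)) ∧
      (∀ ℓ₁ ℓ₂, (Ms ℓ₁).card = (Ms ℓ₂).card) ∧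
      ∀ ν₁ ν₂, InSubspace Ms ρ ν₁ → InSubspace Ms ρ ν₂ →
        (∀ α : Λ, blockCount Ms ν₁ α = blockCount Ms ν₂ α) → d ν₁ = d ν₂

/-- Shelah's number `f^{9,*}_Λ(m, C)`: the minimal `k` divisible by `|Λ|` with `F9StarProp`. -/
noncomputable def f9Star (Λ C : Type*) [Fintype Λ] [DecidableEq Λ] (m : ℕ) : ℕ :=
  sInf {k | Fintype.card Λ ∣ k ∧ F9StarProp Λ C m k}

/-- As `F9StarProp`, but with all blocks of size exactly `n`. -/
def F9StarFixedProp (Λ C : Type*) [DecidableEq Λ] (n m k : ℕ) : Prop :=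
  ∀ d : (Fin k → Λ) → C,
    ∃ (Ms : Fin m → Finset (Fin k)) (ρ : Fin k → Λ),
      (∀ ℓ, (Ms ℓ).card = n) ∧
      (∀ ℓ₁ ℓ₂, ℓ₁ ≠ ℓ₂ → Disjoint (Ms ℓ₁) (Ms ℓ₂)) ∧
      ∀ ν₁ ν₂, InSubspace Ms ρ ν₁ → InSubspace Ms ρ ν₂ →
        (∀ α : Λ, blockCount Ms ν₁ α = blockCount Ms ν₂ α) → d ν₁ = d ν₂

/-- Shelah's number `f^{9,*}_{Λ,n}(m, C)`. -/
noncomputable def f9StarFixed (Λ C : Type*) [Fintype Λ] [DecidableEq Λ] (n m : ℕ) : ℕ :=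
  sInf {k | Fintype.card Λ ∣ k ∧ F9StarFixedProp Λ C n m k}

/-- The partition property underlying `f^{13}_Λ(m, C)`: there is an `m`-element set `N` and
`ρ` on its complement such that any two extensions of `ρ` realizing each letter equally often
on `N` get the same color. -/
def F13Prop (Λ C : Type*) [DecidableEq Λ] (m k : ℕ) : Prop :=
  ∀ d : (Fin k → Λ) → C,
    ∃ N : Finset (Fin k), N.card = m ∧
      ∃ ρ : Fin k → Λ, ∀ η₁ η₂ : Fin k → Λ,
        (∀ t ∉ N, η₁ t = ρ t) → (∀ t ∉ N, η₂ t = ρ t) →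
        (∀ α : Λ, (N.filter fun t => η₁ t = α).card = (N.filter fun t => η₂ t = α).card) →
        d η₁ = d η₂

/-- The number `f^{13}_Λ(m, C)` of Golshani-Shelah. -/
noncomputable def f13 (Λ C : Type*) [DecidableEq Λ] (m : ℕ) : ℕ :=
  sInf {k | F13Prop Λ C m k}

/-- The Gallai-Witt property: every `C`-coloring of `U_{h,n}` (the `h`-tuples of numbers
below `n`) is constant on a homothetic copy `{⟨m_e + d'⬝i_e : e < h⟩ : i_0, …, i_{h-1} ≤ m}`
of the cube `{0, …, m}^h`. -/
def GWProp (C : Type*) (h m n : ℕ) : Prop :=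
  ∀ d : (Fin h → Fin n) → C,
    ∃ d' : ℕ, 0 < d' ∧ ∃ ms : Fin h → ℕ,
      (∀ e, ms e + d' * m < n) ∧
      ∃ c : C, ∀ i : Fin h → ℕ, (∀ e, i e ≤ m) →
        ∀ hlt : ∀ e, ms e + d' * i e < n,
          d (fun e => ⟨ms e + d' * i e, hlt e⟩) = c

/-- The Gallai-Witt number `w_C(h, m)`. -/
noncomputable def gwNum (C : Type*) (h m : ℕ) : ℕ := sInf {n | GWProp C h m n}

/-- The van der Waerden property: every coloring of `{0, …, N-1}` with `r` colors contains a
monochromatic arithmetic progression of length `m` (with positive common difference). -/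
def VDWProp (r m N : ℕ) : Prop :=
  ∀ d : Fin N → Fin r,
    ∃ a dd : ℕ, 0 < dd ∧ (∀ i < m, a + i * dd < N) ∧
      ∃ c : Fin r, ∀ i : ℕ, i < m → ∀ h : a + i * dd < N, d ⟨a + i * dd, h⟩ = c

/-- The van der Waerden number `w(r, m)`. -/
noncomputable def vdwNum (r m : ℕ) : ℕ := sInf {N | VDWProp r m N}

/-- The coloring `d` of `U_{Fin k, Λ}` admits a monochromatic (combinatorial) line. -/
def HasMonoLine {Λ C : Type*} {k : ℕ} (d : (Fin k → Λ) → C) : Prop :=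
  ∃ N : Finset (Fin k), N.Nonempty ∧ ∃ ρ : Fin k → Λ, ∃ c : C,
    ∀ η : Fin k → Λ, (∀ t ∉ N, η t = ρ t) → (∃ a : Λ, ∀ t ∈ N, η t = a) → d η = c

/-- Property `(⊕)` for `m*`: for every `C`-coloring `d` of
`Ω = {⟨ℓ_α : α ∈ Λ⟩ : Σ_α ℓ_α = m*}` there are `ℓ* > 0` and `⟨ℓ*_α : α ∈ Λ⟩` such that all the
tuples `ℓ̄^α` (obtained from `⟨ℓ*_β⟩` by increasing the `α`-entry by `ℓ*`) lie in `Ω` and get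
the same color. -/
def OplusProp (Λ C : Type*) [Fintype Λ] [DecidableEq Λ] (mstar : ℕ) : Prop :=
  ∀ d : (Λ → ℕ) → C,
    ∃ lstar : ℕ, 0 < lstar ∧ ∃ ls : Λ → ℕ,
      (∀ α : Λ, (∑ β : Λ, Function.update ls α (ls α + lstar) β) = mstar) ∧
      ∃ c : C, ∀ α : Λ, d (Function.update ls α (ls α + lstar)) = c

open Classical in
/-- The element of the subspace whose value on the block `Ms ℓ` is `η ℓ`. -/
noncomputable def embSub {Λ : Type*} {k m : ℕ} (Ms : Fin m → Finset (Fin k))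
    (ρ : Fin k → Λ) (η : Fin m → Λ) (t : Fin k) : Λ :=
  if h : ∃ ℓ, t ∈ Ms ℓ then η h.choose else ρ t

lemma embSub_of_mem {Λ : Type*} {k m : ℕ} {Ms : Fin m → Finset (Fin k)}
    (hd : ∀ ℓ₁ ℓ₂, ℓ₁ ≠ ℓ₂ → Disjoint (Ms ℓ₁) (Ms ℓ₂))
    (ρ : Fin k → Λ) (η : Fin m → Λ) {t : Fin k} {ℓ : Fin m} (ht : t ∈ Ms ℓ) :
    embSub Ms ρ η t = η ℓ := by
  have h : ∃ ℓ, t ∈ Ms ℓ := ⟨ℓ, ht⟩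
  have : h.choose = ℓ := by
    by_contra hne
    exact Finset.disjoint_left.1 (hd _ _ hne) h.choose_spec ht
  rw [embSub, dif_pos h, this]

lemma embSub_of_not_mem {Λ : Type*} {k m : ℕ} {Ms : Fin m → Finset (Fin k)}
    (ρ : Fin k → Λ) (η : Fin m → Λ) {t : Fin k} (ht : ∀ ℓ, t ∉ Ms ℓ) :
    embSub Ms ρ η t = ρ t := by
  rw [embSub, dif_neg (by simpa using ht)]

lemma exists_f8StarProp (Λ C : Type*) [Fintype Λ] [DecidableEq Λ] [Nonempty Λ]
    [Fintype C] (m : ℕ) : ∃ k, F8StarProp Λ C m k := by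
  classical
  obtain ⟨n, hn⟩ :=
    Combinatorics.Subspace.exists_mono_in_high_dimension_fin Λ C (Fin m)
  refine ⟨n, fun d => ?_⟩
  obtain ⟨l, c, hc⟩ := hn d
  have key : ∀ ν, InSubspace (fun e => Finset.univ.filter fun i => l.idxFun i = Sum.inr e)
      (fun i => (l.idxFun i).elim id fun _ => Classical.arbitrary Λ) ν → d ν = c := by
    rintro ν ⟨h1, h2⟩
    choose a ha using h2
    rw [← hc a]
    congr 1
    funext i
    rw [Combinatorics.Subspace.coe_apply]
    cases h : l.idxFun i with
    | inl b => rw [h1 i (by simp [h])]; simp [h]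
    | inr e => simpa using ha e i (by simp [h])
  refine ⟨_, _, ?_, ?_, fun ν₁ ν₂ h₁ h₂ _ => (key ν₁ h₁).trans (key ν₂ h₂).symm⟩
  · intro e
    obtain ⟨i, hi⟩ := l.proper e
    exact ⟨i, by simp [hi]⟩
  · intro e₁ e₂ hne
    rw [Finset.disjoint_left]
    intro i h₁ h₂
    simp only [Finset.mem_filter, Finset.mem_univ, true_and] at h₁ h₂
    rw [h₁] at h₂
    exact hne (Sum.inr.inj h₂)

/-- Given a coloring `d` of `U_{m**, Λ}`, where `m** = f^{8,*}_Λ(m*, C)`, there is a coloring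
`e` of `U_{m*, Λ}` depending only on the number of occurrences of each letter, such that an
`e`-monochromatic line yields a `d`-monochromatic line. -/
theorem exists_reduced_coloring (Λ C : Type*) [Fintype Λ] [DecidableEq Λ] [Nonempty Λ]
    [Fintype C] [Nonempty C] (mstar : ℕ) (hmstar : 0 < mstar)
    (d : (Fin (f8Star Λ C mstar) → Λ) → C) :
    ∃ e : (Fin mstar → Λ) → C,
      (∀ η₁ η₂ : Fin mstar → Λ,
        (∀ α : Λ, (Finset.univ.filter fun t => η₁ t = α).card =
            (Finset.univ.filter fun t => η₂ t = α).card) → e η₁ = e η₂) ∧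
      (HasMonoLine e → HasMonoLine d) := by
  classical
  have hP : F8StarProp Λ C mstar (f8Star Λ C mstar) :=
    Nat.sInf_mem (s := {k | F8StarProp Λ C mstar k}) (exists_f8StarProp Λ C mstar)
  obtain ⟨Ms, ρ, hne, hd, hc⟩ := hP d
  have hin : ∀ η, InSubspace Ms ρ (embSub Ms ρ η) := fun η =>
    ⟨fun t ht => embSub_of_not_mem ρ η ht,
      fun ℓ => ⟨η ℓ, fun t ht => embSub_of_mem hd ρ η ht⟩⟩
  have hcount : ∀ η α, blockCount Ms (embSub Ms ρ η) α =
      (Finset.univ.filter fun t => η t = α).card := by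
    intro η α
    unfold blockCount
    congr 1
    ext ℓ
    simp only [Finset.mem_filter, Finset.mem_univ, true_and]
    constructor
    · intro h
      obtain ⟨t, ht⟩ := hne ℓ
      rw [← embSub_of_mem hd ρ η ht]
      exact h t ht
    · intro h t ht
      rw [embSub_of_mem hd ρ η ht, h]
  refine ⟨fun η => d (embSub Ms ρ η), ?_, ?_⟩
  · intro η₁ η₂ h
    exact hc _ _ (hin η₁) (hin η₂) fun α => by rw [hcount, hcount]; exact h α
  · rintro ⟨N, ⟨ℓ₀, hℓ₀⟩, ρ', c, hN⟩
    obtain ⟨t₀, ht₀⟩ := hne ℓ₀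
    refine ⟨N.biUnion Ms, ⟨t₀, Finset.mem_biUnion.2 ⟨ℓ₀, hℓ₀, ht₀⟩⟩, embSub Ms ρ ρ', c, ?_⟩
    rintro ν h1 ⟨a, h2⟩
    have hν : ν = embSub Ms ρ (fun ℓ => if ℓ ∈ N then a else ρ' ℓ) := by
      funext t
      by_cases ht : ∃ ℓ, t ∈ Ms ℓ
      · obtain ⟨ℓ, hℓ⟩ := ht
        rw [embSub_of_mem hd ρ _ hℓ]
        by_cases hm : ℓ ∈ N
        · rw [if_pos hm]
          exact h2 t (Finset.mem_biUnion.2 ⟨ℓ, hm, hℓ⟩)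
        · rw [if_neg hm, h1 t, embSub_of_mem hd ρ _ hℓ]
          intro hmem
          obtain ⟨ℓ', hℓ', ht'⟩ := Finset.mem_biUnion.1 hmem
          have hne' : ℓ' ≠ ℓ := by
            rintro rfl
            exact hm hℓ'
          exact Finset.disjoint_left.1 (hd _ _ hne') ht' hℓ
      · push Not at ht
        rw [embSub_of_not_mem ρ _ ht, h1 t, embSub_of_not_mem ρ _ ht]
        intro hmem
        obtain ⟨ℓ', _, ht'⟩ := Finset.mem_biUnion.1 hmem
        exact ht ℓ' ht'
    rw [hν]
    refine hN _ (fun t ht => if_neg ht) ⟨a, fun t ht => if_pos ht⟩
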